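/- In any implicit knowledge-based HMS model, for every individual i ∈ I, if α_i satisfies properties (II), (III), and (IV), then the derived explicit possibility correspondence Π*_i satisfies Projections Preserve Ignorance: if ω ∈ S_Φ and Ψ ⊆ Φ, then (Π*_i(ω))^↑ ⊆ (Π*_i(ω_Ψ))^↑. -/

import Mathlib

/-!
Every state `ω ∈ S Φ` is the projection of some `ξ` in the top space `S Set.univ`, where every
awareness level is available. Hence `Π*(ω)` and `Π*(ω_Ψ)` are the projections of one and the same
set `Λ*(ξ)` to `S (α ω)` and `S (α ω_Ψ)` (`derivedPi_eq_of_lift`). By (IV) the second space is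
weakly less expressive, so commutativity of the projections carries extensions of `Π*(ω)` to
extensions of `Π*(ω_Ψ)`. Passing through the top space keeps all projections well-defined
although (O) is not among the hypotheses.
-/

/-- The frame underlying HMS (Heifetz–Meier–Schipper) unawareness models: a complete
lattice of nonempty pairwise disjoint state spaces `S Φ` indexed by the subsets
`Φ ⊆ At` of atomic formulas (ordered by inclusion of the index), together with
commuting surjective projections `r Φ Ψ : S Φ → S Ψ` for `Ψ ⊆ Φ`. -/
structure HMSFrame (At : Type*) (Ω : Type*) where
  S : Set At → Set Ω
  S_nonempty : ∀ Φ : Set At, (S Φ).Nonempty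
  S_disjoint : ∀ ⦃Φ Φ' : Set At⦄, Φ ≠ Φ' → Disjoint (S Φ) (S Φ')
  S_cover : ∀ ω : Ω, ∃ Φ : Set At, ω ∈ S Φ
  r : Set At → Set At → Ω → Ω
  r_mem : ∀ ⦃Φ Ψ : Set At⦄, Ψ ⊆ Φ → ∀ ⦃ω : Ω⦄, ω ∈ S Φ → r Φ Ψ ω ∈ S Ψ
  r_surjOn : ∀ ⦃Φ Ψ : Set At⦄, Ψ ⊆ Φ → Set.SurjOn (r Φ Ψ) (S Φ) (S Ψ)
  r_id : ∀ (Φ : Set At), ∀ ω ∈ S Φ, r Φ Φ ω = ω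
  r_comp : ∀ ⦃Φ Ψ Υ : Set At⦄, Υ ⊆ Ψ → Ψ ⊆ Φ → ∀ ω ∈ S Φ, r Ψ Υ (r Φ Ψ ω) = r Φ Υ ω

variable {At Ω : Type*}

/-- `D^↑`, for a subset `D` of the space `S Φ`: all extensions of states in `D` to
(weakly) more expressive spaces. -/
def HMSFrame.up (F : HMSFrame At Ω) (Φ : Set At) (D : Set Ω) : Set Ω :=
  {ω : Ω | ∃ Ψ : Set At, Φ ⊆ Ψ ∧ ω ∈ F.S Ψ ∧ F.r Ψ Φ ω ∈ D}

/-- `E` is an event with base-space `S Φ` (and base some `D ⊆ S Φ`). -/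
def HMSFrame.IsEvent (F : HMSFrame At Ω) (Φ : Set At) (E : Set Ω) : Prop :=
  ∃ D, D ⊆ F.S Φ ∧ E = F.up Φ D

/-- Negation `¬E := (S Φ \ D)^↑` of an event `E` with base-space `S Φ`
(note `S Φ \ E = S Φ \ D` for an event `E` with base `D ⊆ S Φ`). -/
def HMSFrame.neg (F : HMSFrame At Ω) (Φ : Set At) (E : Set Ω) : Set Ω :=
  F.up Φ (F.S Φ \ E)

/-- Properties of the (explicit) possibility correspondence of HMS models:
nonemptiness, Confinement, Generalized Reflexivity, Stationarity,
Projections Preserve Ignorance, and Projections Preserve Knowledge. -/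
structure IsPossibility (F : HMSFrame At Ω) (Pi : Ω → Set Ω) : Prop where
  nonempty : ∀ ω : Ω, (Pi ω).Nonempty
  confinement : ∀ ⦃Φ : Set At⦄ ⦃ω : Ω⦄, ω ∈ F.S Φ → ∃ Ψ, Ψ ⊆ Φ ∧ Pi ω ⊆ F.S Ψ
  genRefl : ∀ ⦃Υ : Set At⦄ ⦃ω : Ω⦄, Pi ω ⊆ F.S Υ → ω ∈ F.up Υ (Pi ω)
  stationarity : ∀ ⦃ω ω' : Ω⦄, ω' ∈ Pi ω → Pi ω' = Pi ω
  projIgnorance : ∀ ⦃Φ Ψ : Set At⦄ ⦃ω : Ω⦄, ω ∈ F.S Φ → Ψ ⊆ Φ →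
    ∀ ⦃Υ Υ' : Set At⦄, Pi ω ⊆ F.S Υ → Pi (F.r Φ Ψ ω) ⊆ F.S Υ' →
      F.up Υ (Pi ω) ⊆ F.up Υ' (Pi (F.r Φ Ψ ω))
  projKnowledge : ∀ ⦃Φ Ψ Υ : Set At⦄ ⦃ω : Ω⦄, Υ ⊆ Ψ → Ψ ⊆ Φ → ω ∈ F.S Φ →
    Pi ω ⊆ F.S Ψ → F.r Ψ Υ '' Pi ω = Pi (F.r Φ Υ ω)

/-- Properties of an implicit possibility correspondence `La` relative to the
explicit possibility correspondence `Pi`: Reflexivity, Stationarity, Projections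
Preserve Implicit Knowledge (whose statement `(Λ(ω))_Ψ = Λ(ω_Ψ)` presupposes that
the projection of `Λ(ω)` is defined, i.e. `Λ(ω) ⊆ S Φ` for `ω ∈ S Φ`),
Explicit Measurability, and Implicit Measurability. -/
structure IsImplicit (F : HMSFrame At Ω) (Pi La : Ω → Set Ω) : Prop where
  refl : ∀ ω : Ω, ω ∈ La ω
  stationarity : ∀ ⦃ω ω' : Ω⦄, ω' ∈ La ω → La ω' = La ω
  projImplicit : ∀ ⦃Φ : Set At⦄ ⦃ω : Ω⦄, ω ∈ F.S Φ →
    La ω ⊆ F.S Φ ∧ ∀ ⦃Ψ : Set At⦄, Ψ ⊆ Φ → F.r Φ Ψ '' La ω = La (F.r Φ Ψ ω)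
  explicitMeas : ∀ ⦃ω ω' : Ω⦄, ω' ∈ La ω → Pi ω' = Pi ω
  implicitMeas : ∀ ⦃Φ Ψ : Set At⦄ ⦃ω ω' : Ω⦄, ω ∈ F.S Φ → Pi ω ⊆ F.S Ψ →
    ω' ∈ Pi ω → La ω' = F.r Φ Ψ '' La ω

/-- Properties of the primitive implicit possibility correspondence `La` of an
implicit knowledge-based HMS model: nonemptiness, Reflexivity, Stationarity, and
Projections Preserve Implicit Knowledge. -/
structure IsImplicitStar (F : HMSFrame At Ω) (La : Ω → Set Ω) : Prop where
  nonempty : ∀ ω : Ω, (La ω).Nonempty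
  refl : ∀ ω : Ω, ω ∈ La ω
  stationarity : ∀ ⦃ω ω' : Ω⦄, ω' ∈ La ω → La ω' = La ω
  projImplicit : ∀ ⦃Φ : Set At⦄ ⦃ω : Ω⦄, ω ∈ F.S Φ →
    La ω ⊆ F.S Φ ∧ ∀ ⦃Ψ : Set At⦄, Ψ ⊆ Φ → F.r Φ Ψ '' La ω = La (F.r Φ Ψ ω)

/-- Property (O) (Lack of Conception): the awareness level at `ω ∈ S Φ` (encoded
by its index `al ω ⊆ At`, so that the awareness level is the space `S (al ω)`)
is weakly less expressive than `S Φ`. -/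
def PropO (F : HMSFrame At Ω) (al : Ω → Set At) : Prop :=
  ∀ ⦃Φ : Set At⦄ ⦃ω : Ω⦄, ω ∈ F.S Φ → al ω ⊆ Φ

/-- Property (I) (Awareness Measurability). -/
def PropI (F : HMSFrame At Ω) (La : Ω → Set Ω) (al : Ω → Set At) : Prop :=
  ∀ ⦃ω ω' : Ω⦄, ω' ∈ La ω → al ω' = al ω

/-- Property (II): if `ω ∈ S Φ` and `S Ψ ⪯ α(ω)` then `α(ω_Ψ) = S Ψ`. -/
def PropII (F : HMSFrame At Ω) (al : Ω → Set At) : Prop :=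
  ∀ ⦃Φ Ψ : Set At⦄ ⦃ω : Ω⦄, ω ∈ F.S Φ → Ψ ⊆ al ω → Ψ ⊆ Φ → al (F.r Φ Ψ ω) = Ψ

/-- Property (III): if `ω ∈ S Φ` and `α(ω) ⪯ S Ψ ⪯ S Φ` then `α(ω_Ψ) = α(ω)`. -/
def PropIII (F : HMSFrame At Ω) (al : Ω → Set At) : Prop :=
  ∀ ⦃Φ Ψ : Set At⦄ ⦃ω : Ω⦄, ω ∈ F.S Φ → al ω ⊆ Ψ → Ψ ⊆ Φ → al (F.r Φ Ψ ω) = al ω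

/-- Property (IV): if `ω ∈ S Φ` and `Ψ ⊆ Φ` then `α(ω) ⪰ α(ω_Ψ)`. -/
def PropIV (F : HMSFrame At Ω) (al : Ω → Set At) : Prop :=
  ∀ ⦃Φ Ψ : Set At⦄ ⦃ω : Ω⦄, ω ∈ F.S Φ → Ψ ⊆ Φ → al (F.r Φ Ψ ω) ⊆ al ω

/-- `PiS` is the explicit possibility correspondence derived from the implicit
possibility correspondence `La` and the awareness function `al`:
`Π*(ω_Ψ) := (Λ*(ω))_{α(ω_Ψ)}` for all `ω ∈ S Φ` and `Ψ ⊆ Φ`. -/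
def DerivedPi (F : HMSFrame At Ω) (La : Ω → Set Ω) (al : Ω → Set At)
    (PiS : Ω → Set Ω) : Prop :=
  ∀ ⦃Φ Ψ : Set At⦄ ⦃ω : Ω⦄, ω ∈ F.S Φ → Ψ ⊆ Φ →
    PiS (F.r Φ Ψ ω) = F.r Φ (al (F.r Φ Ψ ω)) '' La ω

/-- The (explicit) knowledge operator `K(E) := {ω : Π(ω) ⊆ E}` (as a set this
agrees with the definition with default value `∅^{S(E)}` on the vacuous case). -/
def Kop (F : HMSFrame At Ω) (Pi : Ω → Set Ω) (E : Set Ω) : Set Ω :=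
  {ω : Ω | Pi ω ⊆ E}

/-- The implicit knowledge operator `L(E) := {ω : Λ(ω) ⊆ E}`. -/
def Lop (F : HMSFrame At Ω) (La : Ω → Set Ω) (E : Set Ω) : Set Ω :=
  {ω : Ω | La ω ⊆ E}

/-- The awareness operator `A(E) := {ω : S_{Π(ω)} ⪰ S(E)}`, applied to an event
with base-space `S Φ`. -/
def Aop (F : HMSFrame At Ω) (Pi : Ω → Set Ω) (Φ : Set At) : Set Ω :=
  {ω : Ω | ∃ Ψ : Set At, Φ ⊆ Ψ ∧ Pi ω ⊆ F.S Ψ}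

/-- The unawareness operator `U(E) := ¬A(E)`, applied to an event with
base-space `S Φ` (recall `A(E)` is an `S(E)`-based event). -/
def Uop (F : HMSFrame At Ω) (Pi : Ω → Set Ω) (Φ : Set At) : Set Ω :=
  F.neg Φ (Aop F Pi Φ)

/-- The awareness operator `A*(E) := {ω : α(ω) ⪰ S(E)}` defined from the
awareness function, applied to an event with base-space `S Φ`. -/
def AopStar (al : Ω → Set At) (Φ : Set At) : Set Ω :=
  {ω : Ω | Φ ⊆ al ω}

/-- An HMS model: the frame together with a possibility correspondence for each
individual and a valuation mapping each atomic formula to an event. -/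
structure HMSModel (At Ω I : Type*) extends HMSFrame At Ω where
  Pi : I → Ω → Set Ω
  Pi_poss : ∀ i : I, IsPossibility toHMSFrame (Pi i)
  val : At → Set Ω
  val_event : ∀ p : At, ∃ Φ : Set At, toHMSFrame.IsEvent Φ (val p)

/-- A complemented HMS model: an HMS model together with an implicit possibility
correspondence for each individual. -/
structure CompHMSModel (At Ω I : Type*) extends HMSModel At Ω I where
  La : I → Ω → Set Ω
  La_impl : ∀ i : I, IsImplicit toHMSModel.toHMSFrame (Pi i) (La i)

/-- An implicit knowledge-based HMS model: the frame together with, for each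
individual, a primitive implicit possibility correspondence and an awareness
function satisfying (O)-(IV), and a valuation mapping atoms to events. -/
structure ImpHMSModel (At Ω I : Type*) extends HMSFrame At Ω where
  LaS : I → Ω → Set Ω
  LaS_impl : ∀ i : I, IsImplicitStar toHMSFrame (LaS i)
  al : I → Ω → Set At
  al_O : ∀ i : I, PropO toHMSFrame (al i)
  al_I : ∀ i : I, PropI toHMSFrame (LaS i) (al i)
  al_II : ∀ i : I, PropII toHMSFrame (al i)
  al_III : ∀ i : I, PropIII toHMSFrame (al i)
  al_IV : ∀ i : I, PropIV toHMSFrame (al i)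
  val : At → Set Ω
  val_event : ∀ p : At, ∃ Φ : Set At, toHMSFrame.IsEvent Φ (val p)

theorem HMSFrame.index_unique {At Ω : Type*} (F : HMSFrame At Ω) {Φ Ψ : Set At} {ω : Ω}
    (h : ω ∈ F.S Φ) (h' : ω ∈ F.S Ψ) : Φ = Ψ := by
  by_contra hne
  exact Set.disjoint_left.mp (F.S_disjoint hne) h h'

/-- The derived correspondence at a projection of a top-space state `ξ` is the projection of
`Λ*(ξ)` to the awareness level there, and that level is the only space containing it. -/
theorem derivedPi_eq_of_lift {At Ω : Type*} {F : HMSFrame At Ω} {La : Ω → Set Ω}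
    {al : Ω → Set At} {PiS : Ω → Set Ω} (hLa : IsImplicitStar F La)
    (hPiS : DerivedPi F La al PiS) {ξ : Ω} (hξ : ξ ∈ F.S Set.univ) {Φ Υ : Set At} {ω : Ω}
    (hω : F.r Set.univ Φ ξ = ω) (hΥ : PiS ω ⊆ F.S Υ) :
    al ω = Υ ∧ PiS ω = F.r Set.univ Υ '' La ξ := by
  have hPi : PiS ω = F.r Set.univ (al ω) '' La ξ := by
    rw [← hω]
    exact hPiS hξ (Set.subset_univ Φ)
  have hmem : F.r Set.univ (al ω) ξ ∈ PiS ω := hPi ▸ Set.mem_image_of_mem _ (hLa.refl ξ)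
  have hal : al ω = Υ :=
    F.index_unique (F.r_mem (Set.subset_univ _) hξ) (hΥ hmem)
  exact ⟨hal, hal ▸ hPi⟩

/-- In any implicit knowledge-based HMS model, for every individual
`i ∈ I`, if `α_i` satisfies properties (II), (III), and (IV), then the derived
explicit possibility correspondence `Π*_i` satisfies Projections Preserve
Ignorance: if `ω ∈ S_Φ` and `Ψ ⊆ Φ`, then `(Π*_i(ω))^↑ ⊆ (Π*_i(ω_Ψ))^↑`. -/
theorem derived_pi_projections_preserve_ignorance
    {At Ω I : Type*} [Nonempty At] [Nonempty I]
    (F : HMSFrame At Ω) (La : I → Ω → Set Ω) (al : I → Ω → Set At)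
    (PiS : I → Ω → Set Ω) (i : I)
    (hLa : IsImplicitStar F (La i))
    (hPiS : DerivedPi F (La i) (al i) (PiS i))
    (hII : PropII F (al i)) (hIII : PropIII F (al i)) (hIV : PropIV F (al i)) :
    ∀ ⦃Φ Ψ : Set At⦄ ⦃ω : Ω⦄, ω ∈ F.S Φ → Ψ ⊆ Φ →
      ∀ ⦃Υ Υ' : Set At⦄, PiS i ω ⊆ F.S Υ → PiS i (F.r Φ Ψ ω) ⊆ F.S Υ' →
        F.up Υ (PiS i ω) ⊆ F.up Υ' (PiS i (F.r Φ Ψ ω)) := by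
  intro Φ Ψ ω hω hΨΦ Υ Υ' hΥ hΥ'
  obtain ⟨ξ, hξ, hξω⟩ := F.r_surjOn (Set.subset_univ Φ) hω
  have hξΨ : F.r Set.univ Ψ ξ = F.r Φ Ψ ω := by
    rw [← hξω, F.r_comp hΨΦ (Set.subset_univ Φ) ξ hξ]
  obtain ⟨hal, hPi⟩ := derivedPi_eq_of_lift hLa hPiS hξ hξω hΥ
  obtain ⟨hal', hPi'⟩ := derivedPi_eq_of_lift hLa hPiS hξ hξΨ hΥ'
  have hsub : Υ' ⊆ Υ := hal ▸ hal' ▸ hIV hω hΨΦ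
  rintro x ⟨Θ, hΥΘ, hxΘ, hx⟩
  rw [hPi] at hx
  obtain ⟨y, hy, hyx⟩ := hx
  have hyS : y ∈ F.S Set.univ := (hLa.projImplicit hξ).1 hy
  refine ⟨Θ, hsub.trans hΥΘ, hxΘ, ?_⟩
  rw [hPi']
  refine ⟨y, hy, ?_⟩
  rw [← F.r_comp hsub hΥΘ x hxΘ, ← hyx, F.r_comp hsub (Set.subset_univ Υ) y hyS]
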